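/- Let $K_0 \subseteq K$ be an extension of fields with both $K_0$ and $K$ algebraically closed, and assume some element of $K$ is transcendental over $K_0$. Then the intersection of all intermediate fields $F'$ of $K/K_0$ such that $F'$ is algebraically closed and the transcendence degree of $K$ over $F'$ equals $1$ is exactly $K_0$ (i.e., equals the bottom intermediate field of $K/K_0$). -/

import Mathlib

open Cardinal

/-- The transcendence degree of the `R`-algebra `A`: the supremum of the cardinalities of
algebraically independent subsets of `A` over `R`. -/
noncomputable def trdeg (R A : Type*) [CommRing R] [CommRing A] [Algebra R A] : Cardinal :=
  ⨆ s : { s : Set A // AlgebraicIndependent R ((↑) : s → A) }, #s.1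

/-!
If `x` is transcendental over `K0`, extend `{x}` to a transcendence basis `B` of `K / K0` and let
`F'` be the algebraic closure in `K` of `K0(B \ {x})`. Then `{x}` is a transcendence basis of
`K / F'`, so `F'` occurs in the intersection and does not contain `x`. Conversely, an intermediate
field that is algebraically closed in `K` contains every element of `K` algebraic over `K0`.
-/

theorem trdeg_eq_algebra_trdeg (R A : Type*) [CommRing R] [CommRing A] [Algebra R A] :
    trdeg R A = Algebra.trdeg R A :=
  rfl

theorem isTranscendenceBasis_adjoin_image_compl {ι R A : Type*} [CommRing R] [CommRing A]
    [Nontrivial A] [Algebra R A] {b : ι → A} (hb : IsTranscendenceBasis R b) (s : Set ι) :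
    IsTranscendenceBasis (Algebra.adjoin R (b '' s)) (fun i : ↥sᶜ ↦ b i) := by
  have : Nontrivial R := (algebraMap R A).domain_nontrivial
  have adjoin_range : Algebra.adjoin R (Set.range b) =
      (Algebra.adjoin (Algebra.adjoin R (b '' s))
        (Set.range fun i : ↥sᶜ ↦ b i)).restrictScalars R := by
    rw [← Algebra.adjoin_union_eq_adjoin_adjoin, ← Set.image_eq_range, ← Set.image_union,
      Set.union_compl_self, Set.image_univ]
  have isAlgebraic := hb.isAlgebraic
  rw [adjoin_range] at isAlgebraic
  exact isTranscendenceBasis_iff_algebraicIndependent_isAlgebraic.2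
    ⟨((AlgebraicIndependent.iff_adjoin_image s).1 hb.1).2, isAlgebraic⟩

section Field

variable {F E : Type*} [Field F] [Field E] [Algebra F E]

theorem isTranscendenceBasis_algebraicClosure_iff {ι : Type*} {b : ι → E} :
    IsTranscendenceBasis (algebraicClosure F E) b ↔ IsTranscendenceBasis F b :=
  (Algebra.IsAlgebraic.isTranscendenceBasis_iff _ _).symm

theorem isTranscendenceBasis_algebraicClosure_adjoin_image_compl {ι : Type*} {b : ι → E}
    (hb : IsTranscendenceBasis F b) (s : Set ι) :
    IsTranscendenceBasis (algebraicClosure (IntermediateField.adjoin F (b '' s)) E)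
      (fun i : ↥sᶜ ↦ b i) :=
  isTranscendenceBasis_algebraicClosure_iff.2 <|
    IntermediateField.isTranscendenceBasis_adjoin_iff.2 <|
      isTranscendenceBasis_adjoin_image_compl hb s

theorem exists_algebraicClosure_eq_bot_trdeg_eq_one_notMem {x : E} (hx : Transcendental F x) :
    ∃ L : IntermediateField F E, (algebraicClosure L E = ⊥ ∧ trdeg L E = 1) ∧ x ∉ L := by
  have indep : AlgebraicIndepOn F id {x} := algebraicIndependent_unique_type_iff.2 hx
  obtain ⟨B, hxB, hB⟩ := exists_isTranscendenceBasis_superset indep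
  let i : B := ⟨x, hxB rfl⟩
  let L := algebraicClosure (IntermediateField.adjoin F (Subtype.val '' ({i}ᶜ : Set B))) E
  have basis : IsTranscendenceBasis L (fun j : ↥({i}ᶜᶜ : Set B) ↦ (j : E)) :=
    isTranscendenceBasis_algebraicClosure_adjoin_image_compl hB {i}ᶜ
  have trdeg_L : trdeg L E = 1 := by
    rw [trdeg_eq_algebra_trdeg, ← basis.cardinalMk_eq_trdeg, compl_compl, mk_singleton]
  have transcendental_x : Transcendental L x := basis.1.transcendental ⟨i, not_not.2 rfl⟩
  exact ⟨L.restrictScalars F, ⟨algebraicClosure.algebraicClosure_eq_bot _ E, trdeg_L⟩,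
    fun hxL ↦ transcendental_x (isAlgebraic_algebraMap (⟨x, hxL⟩ : L))⟩

theorem algebraicClosure_le_of_algebraicClosure_eq_bot {L : IntermediateField F E}
    (hL : algebraicClosure L E = ⊥) : algebraicClosure F E ≤ L := by
  simpa [hL] using algebraicClosure.le_restrictScalars F L E

end Field

theorem statement1_general (K0 K : Type*) [Field K0] [Field K] [Algebra K0 K] :
    sInf {F' : IntermediateField K0 K | algebraicClosure F' K = ⊥ ∧ trdeg F' K = 1} =
      algebraicClosure K0 K := by
  refine le_antisymm (fun x hx ↦ ?_) <|
    le_sInf fun F' hF' ↦ algebraicClosure_le_of_algebraicClosure_eq_bot hF'.1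
  by_contra hxK0
  obtain ⟨F', hF', hxF'⟩ := exists_algebraicClosure_eq_bot_trdeg_eq_one_notMem
    (mt mem_algebraicClosure_iff.2 hxK0)
  exact hxF' (IntermediateField.mem_sInf.1 hx F' hF')

theorem statement1 (K0 K : Type*) [Field K0] [Field K] [Algebra K0 K]
    [IsAlgClosed K0] [IsAlgClosed K] (h : ∃ x : K, Transcendental K0 x) :
    sInf {F' : IntermediateField K0 K | IsAlgClosed F' ∧ trdeg F' K = 1} = ⊥ := by
  simpa only [IsAlgClosed.algebraicClosure_eq_bot_iff,
    (IsAlgClosed.algebraicClosure_eq_bot_iff K0 K).2 ‹_›] using statement1_general K0 K
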